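/- Let n ≥ 2, s ∈ (0,1), e ∈ ℝⁿ, and v ∈ C^{1,1}(ℝ) bounded, and define v_e : ℝⁿ → ℝ by v_e(x) = v(e·x). Then for every x ∈ ℝⁿ, I_n^s[v_e](x) = |e|^{2s} C_{n,s} I_1^s[v](e·x), where I_m^s u(x) = P.V. ∫_{ℝ^m} (u(x+y) − u(x)) |y|^{-(m+2s)} dy and C_{n,s} = ∫_{ℝ^{n-1}} (|y|² + 1)^{-(n+2s)/2} dy. Consequently, for every ξ ∈ ℝ, |e|^{2s} C_{n,s} · P.V. ∫_ℝ (v(ξ+h)−v(ξ))|h|^{-1-2s} dh = P.V. ∫_{ℝⁿ} (v(ξ + e·z) − v(ξ)) |z|^{-(n+2s)} dz. -/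

import Mathlib

/-!
Both principal values are computed by symmetrization. The truncation region `{δ < ‖y‖}` is invariant
under `y ↦ -y`, so the numerator `f` may be replaced by half of `f y + f (-y)`. For
`f h = v (ξ + h) - v ξ` this sum is the second difference `g h` of `v`, which is bounded and
`O(|h| ^ 2)` because `v` is bounded and `v'` is Lipschitz (`abs_second_difference_le`). Hence
the symmetrized integrands are absolutely integrable, and the principal values exist and equal
half of honest Lebesgue integrals (`tendsto_principalValue`).

It remains to compare the integrals of `g (e·z) / ‖z‖ ^ (n + 2s)` over `ℝⁿ` and
`g h / |h| ^ (1 + 2s)` over `ℝ` (`integral_ridge_eq`). In orthonormal coordinates `(t, y)` whose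
first axis points along `e`, the first integrand is
`g (‖e‖ t) (t ^ 2 + ‖y‖ ^ 2) ^ (-(n + 2s) / 2)`. By Fubini, integrate in `y` first: the dilation
`y ↦ |t| y` turns the inner integral into `C_{n,s} |t| ^ (-1 - 2s)` (`integral_slice`), and the
substitution `h = ‖e‖ t` then produces the factor `‖e‖ ^ (2s)`. For `e = 0` both sides vanish.
-/

open MeasureTheory Real Set Filter Metric
open scoped Topology RealInnerProductSpace NNReal

/-- In polar coordinates this is the integrability on `(0, ∞)` of
`min (A r ^ 2) B * r ^ (-1 - 2s)`, which holds near `0` since `s < 1` and at infinity since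
`0 < s`. -/
lemma integrable_radial_majorant {E : Type*} [NormedAddCommGroup E] [InnerProductSpace ℝ E]
    [FiniteDimensional ℝ E] [MeasurableSpace E] [BorelSpace E] [Nontrivial E]
    {s : ℝ} (hs : s ∈ Ioo (0 : ℝ) 1) {A B : ℝ} (hA : 0 ≤ A) (hB : 0 ≤ B) :
    Integrable (fun y : E => min (A * ‖y‖ ^ 2) B / ‖y‖ ^ ((Module.finrank ℝ E : ℝ) + 2 * s)) := by
  obtain ⟨hs0, hs1⟩ := hs
  have hd : 0 < Module.finrank ℝ E := Module.finrank_pos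
  refine (integrable_fun_norm_addHaar (volume : Measure E)
    (f := fun r : ℝ => min (A * r ^ 2) B / r ^ ((Module.finrank ℝ E : ℝ) + 2 * s))).2 ?_
  have key : ∀ r ∈ Ioi (0 : ℝ), min (A * r ^ 2) B * r ^ (-1 - 2 * s) =
      r ^ (Module.finrank ℝ E - 1) •
        (min (A * r ^ 2) B / r ^ ((Module.finrank ℝ E : ℝ) + 2 * s)) := by
    intro r hr
    have hr : 0 < r := hr
    rw [smul_eq_mul, ← Real.rpow_natCast r (_ - 1), Nat.cast_sub hd, div_eq_mul_inv,
      ← Real.rpow_neg hr.le, mul_left_comm, ← Real.rpow_add hr]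
    congr 2
    push_cast; ring
  refine IntegrableOn.congr_fun ?_ key measurableSet_Ioi
  have hm : Measurable (fun r : ℝ => min (A * r ^ 2) B * r ^ (-1 - 2 * s)) := by fun_prop
  rw [← Ioc_union_Ioi_eq_Ioi zero_le_one]
  refine IntegrableOn.union ?_ ?_
  · have h1 : IntegrableOn (fun r : ℝ => r ^ (1 - 2 * s)) (Ioc 0 1) := by
      have := intervalIntegral.intervalIntegrable_rpow' (a := 0) (b := 1)
        (r := 1 - 2 * s) (by linarith)
      rwa [intervalIntegrable_iff, uIoc_of_le zero_le_one] at this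
    refine (h1.const_mul A).mono' hm.aestronglyMeasurable ?_
    refine (ae_restrict_iff' measurableSet_Ioc).2 (ae_of_all _ fun r hr => ?_)
    have hr0 : 0 < r := hr.1
    rw [Real.norm_of_nonneg (by positivity)]
    have e1 : r ^ (1 - 2 * s) = r ^ 2 * r ^ (-1 - 2 * s) := by
      rw [← Real.rpow_natCast r 2, ← Real.rpow_add hr0]; congr 1; push_cast; ring
    rw [e1, ← mul_assoc]
    gcongr
    exact min_le_left _ _
  · have h1 : IntegrableOn (fun r : ℝ => r ^ (-1 - 2 * s)) (Ioi 1) :=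
      integrableOn_Ioi_rpow_of_lt (by linarith) one_pos
    refine (h1.const_mul B).mono' hm.aestronglyMeasurable ?_
    refine (ae_restrict_iff' measurableSet_Ioi).2 (ae_of_all _ fun r hr => ?_)
    have hr0 : 0 < r := one_pos.trans hr
    rw [Real.norm_of_nonneg (by positivity)]
    gcongr
    exact min_le_right _ _

lemma integrable_div_norm_rpow {E : Type*} [NormedAddCommGroup E] [InnerProductSpace ℝ E]
    [FiniteDimensional ℝ E] [MeasurableSpace E] [BorelSpace E] [Nontrivial E]
    {s : ℝ} (hs : s ∈ Ioo (0 : ℝ) 1) {A B : ℝ} (hA : 0 ≤ A) (hB : 0 ≤ B)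
    {g : E → ℝ} (hg : Continuous g) (hgA : ∀ y, |g y| ≤ A * ‖y‖ ^ 2) (hgB : ∀ y, |g y| ≤ B) :
    Integrable (fun y : E => g y / ‖y‖ ^ ((Module.finrank ℝ E : ℝ) + 2 * s)) := by
  refine (integrable_radial_majorant hs hA hB).mono' ?_ (ae_of_all _ fun y => ?_)
  · have : Measurable g := hg.measurable
    exact Measurable.aestronglyMeasurable (by fun_prop)
  · rw [norm_div, Real.norm_eq_abs, Real.norm_of_nonneg (Real.rpow_nonneg (norm_nonneg y) _)]
    gcongr
    exact le_min (hgA y) (hgB y)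

/-- The principal value exists as soon as the even part of the numerator is `O(‖y‖ ^ 2)`, and it
is then an absolutely convergent integral. -/
lemma tendsto_principalValue {E : Type*} [NormedAddCommGroup E] [InnerProductSpace ℝ E]
    [FiniteDimensional ℝ E] [MeasurableSpace E] [BorelSpace E] [Nontrivial E]
    {s : ℝ} (hs : s ∈ Ioo (0 : ℝ) 1) {A B : ℝ} (hA : 0 ≤ A) (hB : 0 ≤ B)
    {f : E → ℝ} (hf : Continuous f) (hfB : ∀ y, |f y| ≤ B)
    (hfA : ∀ y, |f y + f (-y)| ≤ A * ‖y‖ ^ 2) :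
    Tendsto (fun δ : ℝ => ∫ y in {y : E | δ < ‖y‖},
        f y / ‖y‖ ^ ((Module.finrank ℝ E : ℝ) + 2 * s)) (𝓝[>] 0)
      (𝓝 ((∫ y : E, (f y + f (-y)) / ‖y‖ ^ ((Module.finrank ℝ E : ℝ) + 2 * s)) / 2)) := by
  set p : ℝ := (Module.finrank ℝ E : ℝ) + 2 * s with hp
  have hp0 : p ≠ 0 := by have := hs.1; positivity
  have hfm : Measurable f := hf.measurable
  have hS : ∀ δ : ℝ, MeasurableSet {y : E | δ < ‖y‖} := fun δ =>
    measurableSet_lt measurable_const measurable_norm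
  have hint : Integrable (fun y : E => (f y + f (-y)) / ‖y‖ ^ p) := by
    refine integrable_div_norm_rpow hs hA (B := B + B) (by positivity) (by fun_prop) hfA
      fun y => (abs_add_le _ _).trans (add_le_add (hfB _) (hfB _))
  -- away from the origin the constant bound `B` is itself dominated by a multiple of `‖y‖ ^ 2`
  have htrunc : ∀ δ : ℝ, 0 < δ → IntegrableOn (fun y : E => f y / ‖y‖ ^ p) {y : E | δ < ‖y‖} := by
    intro δ hδ
    refine ((integrable_radial_majorant (E := E) hs (A := B / δ ^ 2) (by positivity)
      hB).integrableOn (s := {y : E | δ < ‖y‖})).mono' ?_ ?_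
    · exact Measurable.aestronglyMeasurable (by fun_prop)
    · refine (ae_restrict_iff' (hS δ)).2 (ae_of_all _ fun y hy => ?_)
      rw [norm_div, Real.norm_eq_abs, Real.norm_of_nonneg (Real.rpow_nonneg (norm_nonneg y) _)]
      gcongr
      refine le_min ((hfB y).trans ?_) (hfB y)
      rw [div_mul_eq_mul_div, le_div_iff₀ (by positivity)]
      have hy : δ < ‖y‖ := hy
      gcongr
  have hsymm : ∀ δ : ℝ, 0 < δ → ∫ y in {y : E | δ < ‖y‖}, f y / ‖y‖ ^ p =
      (∫ y, {y : E | δ < ‖y‖}.indicator (fun y => (f y + f (-y)) / ‖y‖ ^ p) y) / 2 := by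
    intro δ hδ
    have i1 := (integrable_indicator_iff (hS δ)).2 (htrunc δ hδ)
    have i2 := i1.comp_neg
    have e2 := integral_neg_eq_self ({y : E | δ < ‖y‖}.indicator (fun y => f y / ‖y‖ ^ p)) volume
    have e3 : ({y : E | δ < ‖y‖}.indicator (fun y => (f y + f (-y)) / ‖y‖ ^ p)) = fun y =>
        {y : E | δ < ‖y‖}.indicator (fun y => f y / ‖y‖ ^ p) y +
        {y : E | δ < ‖y‖}.indicator (fun y => f y / ‖y‖ ^ p) (-y) := by
      ext y
      by_cases hy : δ < ‖y‖ <;> simp [indicator, hy, add_div]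
    rw [e3, integral_add i1 i2, e2, integral_indicator (hS δ)]
    ring
  refine Tendsto.congr' (f₁ := fun δ => (∫ y, {y : E | δ < ‖y‖}.indicator
    (fun y => (f y + f (-y)) / ‖y‖ ^ p) y) / 2)
    (eventually_nhdsWithin_of_forall fun δ hδ => (hsymm δ hδ).symm) ?_
  refine Tendsto.div_const ?_ 2
  refine tendsto_integral_filter_of_dominated_convergence
    (fun y => ‖(f y + f (-y)) / ‖y‖ ^ p‖) ?_ ?_ hint.norm ?_
  · exact Eventually.of_forall fun δ => hint.aestronglyMeasurable.indicator (hS δ)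
  · exact Eventually.of_forall fun δ => ae_of_all _ fun y => norm_indicator_le_norm_self _ _
  · refine ae_of_all _ fun y => ?_
    rcases eq_or_ne y 0 with rfl | hy
    · -- the quotient takes the junk value `0` at the origin
      simp [indicator, Real.zero_rpow hp0]
    · refine tendsto_const_nhds.congr' ?_
      filter_upwards [nhdsWithin_le_nhds (Iio_mem_nhds (norm_pos_iff.2 hy))] with δ hδ
      rw [indicator_of_mem (show y ∈ {y : E | δ < ‖y‖} from hδ)]

/-- Mean value inequality for `t ↦ v (ξ + t) + v (ξ - t)`, whose derivative is bounded by `2K|t|`. -/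
lemma abs_second_difference_le {v : ℝ → ℝ} (hvdiff : Differentiable ℝ v) {K : ℝ≥0}
    (hvC11 : LipschitzWith K (deriv v)) (ξ h : ℝ) :
    |(v (ξ + h) - v ξ) + (v (ξ + -h) - v ξ)| ≤ 2 * K * |h| ^ 2 := by
  have hd : ∀ t : ℝ, HasDerivAt (fun t => v (ξ + t) + v (ξ + -t))
      (deriv v (ξ + t) - deriv v (ξ + -t)) t := by
    intro t
    have h1 := (hvdiff (ξ + t)).hasDerivAt.comp_const_add ξ t
    have h2 := HasDerivAt.scomp t (hvdiff (ξ + -t)).hasDerivAt ((hasDerivAt_neg t).const_add ξ)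
    convert! h1.add h2 using 1
    simp; ring
  have hb := (convex_closedBall (0 : ℝ) |h|).norm_image_sub_le_of_norm_hasDerivWithin_le
    (f := fun t => v (ξ + t) + v (ξ + -t)) (C := 2 * K * |h|) (x := 0) (y := h)
    (fun t _ => (hd t).hasDerivWithinAt) (fun t ht => by
      have ht : |t| ≤ |h| := by simpa using ht
      have := hvC11.dist_le_mul (ξ + t) (ξ + -t)
      rw [Real.dist_eq, Real.dist_eq] at this
      calc _ ≤ K * |ξ + t - (ξ + -t)| := this
        _ = 2 * K * |t| := by
          rw [show ξ + t - (ξ + -t) = 2 * t by ring, abs_mul, abs_two]; ring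
        _ ≤ _ := by gcongr) (by simp) (by simp)
  simp only [Real.norm_eq_abs, neg_zero, add_zero, sub_zero] at hb
  convert hb using 1
  · congr 1; ring
  · ring

/-- Integral of the kernel over the hyperplane at height `t`, reduced to height `1` by scaling. No
integrability is needed: the dilation formula holds for the Bochner integral of any function. -/
lemma integral_slice (m : ℕ) (s : ℝ) {t : ℝ} (ht : t ≠ 0) :
    ∫ y : EuclideanSpace ℝ (Fin m), (t ^ 2 + ‖y‖ ^ 2) ^ (-((((m + 1 : ℕ) : ℝ) + 2 * s) / 2)) =
      (|t| ^ (1 + 2 * s))⁻¹ *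
        ∫ y : EuclideanSpace ℝ (Fin m), (‖y‖ ^ 2 + 1) ^ (-((((m + 1 : ℕ) : ℝ) + 2 * s) / 2)) := by
  have ht' : 0 < |t| := abs_pos.2 ht
  set p : ℝ := ((m + 1 : ℕ) : ℝ) + 2 * s with hp
  have h := Measure.integral_comp_smul (volume : Measure (EuclideanSpace ℝ (Fin m)))
    (fun y => (‖y‖ ^ 2 + 1) ^ (-(p / 2))) t⁻¹
  have e1 : ∀ y : EuclideanSpace ℝ (Fin m), (‖t⁻¹ • y‖ ^ 2 + 1) ^ (-(p / 2)) =
      |t| ^ p * (t ^ 2 + ‖y‖ ^ 2) ^ (-(p / 2)) := by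
    intro y
    have e : ‖t⁻¹ • y‖ ^ 2 + 1 = (|t| ^ 2)⁻¹ * (t ^ 2 + ‖y‖ ^ 2) := by
      rw [norm_smul, norm_inv, Real.norm_eq_abs, mul_pow, inv_pow, sq_abs]
      field_simp
      ring
    rw [e, Real.mul_rpow (by positivity) (by positivity), Real.inv_rpow (by positivity),
      Real.rpow_neg (by positivity), inv_inv, ← Real.rpow_natCast, ← Real.rpow_mul ht'.le]
    congr 2
    push_cast; ring
  simp only [e1, integral_const_mul, finrank_euclideanSpace_fin, smul_eq_mul, inv_pow, inv_inv,
    abs_pow] at h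
  rw [show p = (m : ℝ) + (1 + 2 * s) by rw [hp]; push_cast; ring, Real.rpow_add ht',
    Real.rpow_natCast, ← show p = (m : ℝ) + (1 + 2 * s) by rw [hp]; push_cast; ring, mul_assoc] at h
  have h2 := mul_left_cancel₀ (by positivity) h
  rw [← h2, inv_mul_cancel_left₀ (by positivity)]

/-- Volume-preserving splitting of `ℝ^(m+1)` into the line spanned by `e` and its orthogonal
complement. -/
lemma exists_adapted_coordinates (m : ℕ) {e : EuclideanSpace ℝ (Fin (m + 1))} (he : e ≠ 0) :
    ∃ Φ : EuclideanSpace ℝ (Fin (m + 1)) ≃ᵐ ℝ × EuclideanSpace ℝ (Fin m),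
      MeasurePreserving Φ ∧ ∀ z, ⟪e, z⟫ = ‖e‖ * (Φ z).1 ∧
        ‖z‖ ^ 2 = (Φ z).1 ^ 2 + ‖(Φ z).2‖ ^ 2 := by
  have he' : ‖e‖ ≠ 0 := norm_ne_zero_iff.2 he
  -- complete the unit vector `e / ‖e‖` to an orthonormal basis, placing it at index `0`
  obtain ⟨b, hb⟩ := Orthonormal.exists_orthonormalBasis_extension_of_card_eq (𝕜 := ℝ)
    (E := EuclideanSpace ℝ (Fin (m + 1))) (ι := Fin (m + 1)) (by simp)
    (v := fun _ => ‖e‖⁻¹ • e) (s := {0}) (by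
      refine ⟨fun i => ?_, fun i j hij => (hij (Subsingleton.elim _ _)).elim⟩
      simp [norm_smul, he'])
  have hb0 : b 0 = ‖e‖⁻¹ • e := hb 0 rfl
  let Ψ : EuclideanSpace ℝ (Fin (m + 1)) ≃ᵐ ℝ × EuclideanSpace ℝ (Fin m) :=
    (MeasurableEquiv.toLp 2 (Fin (m + 1) → ℝ)).symm.trans
      ((MeasurableEquiv.piFinSuccAbove (fun _ => ℝ) 0).trans
        ((MeasurableEquiv.refl ℝ).prodCongr (MeasurableEquiv.toLp 2 (Fin m → ℝ))))
  have hΨ : MeasurePreserving Ψ :=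
    (EuclideanSpace.volume_preserving_symm_measurableEquiv_toLp _).trans
      ((volume_preserving_piFinSuccAbove (fun _ => ℝ) 0).trans
        ((MeasurePreserving.id volume).prod
          (EuclideanSpace.volume_preserving_symm_measurableEquiv_toLp _).symm))
  have h1 : ∀ w, (Ψ w).1 = w 0 := fun w => rfl
  have h2 : ∀ w i, (Ψ w).2 i = w (Fin.succ i) := fun w i => rfl
  refine ⟨b.repr.toHomeomorph.toMeasurableEquiv.trans Ψ,
    b.measurePreserving_repr.trans hΨ, fun z => ⟨?_, ?_⟩⟩
  · change _ = ‖e‖ * (Ψ (b.repr z)).1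
    rw [h1, b.repr_apply_apply, hb0, real_inner_smul_left, mul_inv_cancel_left₀ he']
  · change _ = (Ψ (b.repr z)).1 ^ 2 + ‖(Ψ (b.repr z)).2‖ ^ 2
    rw [← b.repr.norm_map z, EuclideanSpace.real_norm_sq_eq, EuclideanSpace.real_norm_sq_eq,
      Fin.sum_univ_succ, h1]
    simp only [h2]

/-- Comparison of the absolutely convergent integrals: Fubini in the coordinates adapted to `e`. -/
lemma integral_ridge_eq (m : ℕ) (s : ℝ)
    {e : EuclideanSpace ℝ (Fin (m + 1))} (he : e ≠ 0) {g : ℝ → ℝ}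
    (hint : Integrable (fun z : EuclideanSpace ℝ (Fin (m + 1)) =>
      g ⟪e, z⟫ / ‖z‖ ^ (((m + 1 : ℕ) : ℝ) + 2 * s))) :
    ∫ z : EuclideanSpace ℝ (Fin (m + 1)), g ⟪e, z⟫ / ‖z‖ ^ (((m + 1 : ℕ) : ℝ) + 2 * s) =
      ‖e‖ ^ (2 * s) *
        (∫ y : EuclideanSpace ℝ (Fin m), (‖y‖ ^ 2 + 1) ^ (-((((m + 1 : ℕ) : ℝ) + 2 * s) / 2))) *
        ∫ h : ℝ, g h / |h| ^ (1 + 2 * s) := by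
  obtain ⟨Φ, hΦ, hc⟩ := exists_adapted_coordinates m he
  have he' : 0 < ‖e‖ := norm_pos_iff.2 he
  set p : ℝ := ((m + 1 : ℕ) : ℝ) + 2 * s with hp
  set C := ∫ y : EuclideanSpace ℝ (Fin m), (‖y‖ ^ 2 + 1) ^ (-(p / 2)) with hC
  let H : ℝ × EuclideanSpace ℝ (Fin m) → ℝ := fun q =>
    g (‖e‖ * q.1) * (q.1 ^ 2 + ‖q.2‖ ^ 2) ^ (-(p / 2))
  have hH : (fun z : EuclideanSpace ℝ (Fin (m + 1)) => g ⟪e, z⟫ / ‖z‖ ^ p) = H ∘ Φ := by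
    ext z
    simp only [H, Function.comp_apply]
    rw [← (hc z).1, ← (hc z).2, ← Real.rpow_natCast, ← Real.rpow_mul (norm_nonneg _),
      div_eq_mul_inv, ← Real.rpow_neg (norm_nonneg _)]
    congr 2
    push_cast; ring
  rw [hH] at hint ⊢
  have hHint : Integrable H := (hΦ.integrable_comp_emb Φ.measurableEmbedding).1 hint
  have hslice : ∀ᵐ t : ℝ, ∫ y : EuclideanSpace ℝ (Fin m), H (t, y) =
      ‖e‖ ^ (1 + 2 * s) * C * (g (‖e‖ * t) / |‖e‖ * t| ^ (1 + 2 * s)) := by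
    filter_upwards [Measure.ae_ne volume (0 : ℝ)] with t ht
    have ht' : 0 < |t| := abs_pos.2 ht
    simp only [H]
    rw [integral_const_mul, integral_slice m s ht, abs_mul, abs_norm,
      Real.mul_rpow he'.le ht'.le]
    have : 0 < ‖e‖ ^ (1 + 2 * s) := by positivity
    have : 0 < |t| ^ (1 + 2 * s) := by positivity
    rw [← hp, ← hC]
    field_simp
  calc ∫ z, (H ∘ Φ) z = ∫ q, H q := hΦ.integral_comp Φ.measurableEmbedding H
    _ = ∫ t : ℝ, ∫ y : EuclideanSpace ℝ (Fin m), H (t, y) := integral_prod H hHint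
    _ = ∫ t : ℝ, ‖e‖ ^ (1 + 2 * s) * C * (g (‖e‖ * t) / |‖e‖ * t| ^ (1 + 2 * s)) :=
        integral_congr_ae hslice
    _ = ‖e‖ ^ (1 + 2 * s) * C * (‖e‖⁻¹ * ∫ h : ℝ, g h / |h| ^ (1 + 2 * s)) := by
        rw [integral_const_mul,
          Measure.integral_comp_mul_left (fun h : ℝ => g h / |h| ^ (1 + 2 * s)) ‖e‖,
          abs_of_pos (inv_pos.2 he'), smul_eq_mul]
    _ = _ := by
        rw [Real.rpow_add he', Real.rpow_one]
        field_simp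

/-- Both principal values at a point `ξ` of the line, in dimension `n = m + 1`. -/
lemma principalValues_at (m : ℕ) {s : ℝ} (hs : s ∈ Ioo (0 : ℝ) 1)
    (e : EuclideanSpace ℝ (Fin (m + 1))) {v : ℝ → ℝ}
    (hvdiff : Differentiable ℝ v) {K : ℝ≥0} (hvC11 : LipschitzWith K (deriv v))
    {Mv : ℝ} (hvbdd : ∀ t : ℝ, |v t| ≤ Mv) (ξ : ℝ) :
    ∃ L : ℝ,
      Tendsto (fun δ : ℝ => ∫ h in {h : ℝ | δ < |h|}, (v (ξ + h) - v ξ) / |h| ^ (1 + 2 * s))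
        (𝓝[>] 0) (𝓝 L) ∧
      Tendsto (fun δ : ℝ => ∫ z in {z : EuclideanSpace ℝ (Fin (m + 1)) | δ < ‖z‖},
          (v (ξ + ⟪e, z⟫) - v ξ) / ‖z‖ ^ (((m + 1 : ℕ) : ℝ) + 2 * s))
        (𝓝[>] 0)
        (𝓝 (‖e‖ ^ (2 * s) * (∫ y : EuclideanSpace ℝ (Fin m),
          (‖y‖ ^ 2 + 1) ^ (-((((m + 1 : ℕ) : ℝ) + 2 * s) / 2))) * L)) := by
  have hM : 0 ≤ Mv := (abs_nonneg _).trans (hvbdd 0)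
  have hvc : Continuous v := hvdiff.continuous
  have hB : ∀ h, |v (ξ + h) - v ξ| ≤ Mv + Mv := fun h =>
    (abs_sub _ _).trans (add_le_add (hvbdd _) (hvbdd _))
  have hsd := abs_second_difference_le hvdiff hvC11 ξ
  have t1 := tendsto_principalValue (E := ℝ) hs (A := 2 * K) (B := Mv + Mv) (by positivity)
    (by positivity) (f := fun h => v (ξ + h) - v ξ) (by fun_prop) hB hsd
  simp only [Module.finrank_self, Nat.cast_one, Real.norm_eq_abs] at t1
  refine ⟨_, t1, ?_⟩
  rcases eq_or_ne e 0 with rfl | he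
  · have h2s : 2 * s ≠ 0 := by have := hs.1; positivity
    simp [Real.zero_rpow h2s]
  have hsd' : ∀ z : EuclideanSpace ℝ (Fin (m + 1)),
      |(v (ξ + ⟪e, z⟫) - v ξ) + (v (ξ + ⟪e, -z⟫) - v ξ)| ≤ 2 * K * ‖e‖ ^ 2 * ‖z‖ ^ 2 := by
    intro z
    rw [inner_neg_right]
    refine (hsd _).trans ?_
    rw [mul_assoc _ (‖e‖ ^ 2), ← mul_pow]
    gcongr
    exact abs_real_inner_le_norm e z
  have t2 := tendsto_principalValue (E := EuclideanSpace ℝ (Fin (m + 1))) hs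
    (A := 2 * K * ‖e‖ ^ 2) (B := Mv + Mv) (by positivity)
    (by positivity) (f := fun z => v (ξ + ⟪e, z⟫) - v ξ) (by fun_prop) (fun z => hB _) hsd'
  have hint := integrable_div_norm_rpow hs (A := 2 * K * ‖e‖ ^ 2)
    (B := (Mv + Mv) + (Mv + Mv)) (by positivity) (by positivity)
    (g := fun z : EuclideanSpace ℝ (Fin (m + 1)) =>
      (v (ξ + ⟪e, z⟫) - v ξ) + (v (ξ + ⟪e, -z⟫) - v ξ)) (by fun_prop) hsd'
    (fun z => (abs_add_le _ _).trans (add_le_add (hB _) (hB _)))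
  simp only [finrank_euclideanSpace_fin, inner_neg_right] at t2 hint
  have hmain := integral_ridge_eq m s he (g := fun h => (v (ξ + h) - v ξ) + (v (ξ + -h) - v ξ)) hint
  rw [hmain, mul_div_assoc] at t2
  exact t2

/-- **Lemma (1d vs nd fractional Laplacian).** For `e ∈ ℝⁿ` and `v ∈ C^{1,1}(ℝ)` bounded,
with `v_e(x) = v(e·x)`, one has `I_n^s[v_e](x) = |e|^{2s} C_{n,s} I_1^s[v](e·x)` for all
`x`, and consequently for every `ξ ∈ ℝ`,
`|e|^{2s} C_{n,s}·P.V.∫_ℝ (v(ξ+h)−v(ξ))|h|^{-1-2s} dh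
  = P.V.∫_{ℝⁿ} (v(ξ+e·z)−v(ξ))|z|^{-(n+2s)} dz`,
both principal values being asserted to exist. Here
`C_{n,s} = ∫_{ℝ^{n-1}} (|y|²+1)^{-(n+2s)/2} dy`. -/
theorem fractional_laplacian_one_dim_vs_n_dim
    (n : ℕ) (hn : 2 ≤ n) (s : ℝ) (hs : s ∈ Set.Ioo (0 : ℝ) 1)
    (e : EuclideanSpace ℝ (Fin n)) (v : ℝ → ℝ)
    (hvdiff : Differentiable ℝ v) (K : ℝ≥0) (hvC11 : LipschitzWith K (deriv v))
    (Mv : ℝ) (hvbdd : ∀ t : ℝ, |v t| ≤ Mv) :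
    (∀ x : EuclideanSpace ℝ (Fin n), ∃ L : ℝ,
      Filter.Tendsto
        (fun δ : ℝ => ∫ h in {h : ℝ | δ < |h|}, (v (⟪e, x⟫ + h) - v ⟪e, x⟫) / |h| ^ (1 + 2*s))
        (nhdsWithin 0 (Set.Ioi 0)) (nhds L) ∧
      Filter.Tendsto
        (fun δ : ℝ => ∫ y in {y : EuclideanSpace ℝ (Fin n) | δ < ‖y‖},
          (v ⟪e, x + y⟫ - v ⟪e, x⟫) / ‖y‖ ^ ((n : ℝ) + 2*s))
        (nhdsWithin 0 (Set.Ioi 0))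
        (nhds (‖e‖ ^ (2*s)
          * (∫ y : EuclideanSpace ℝ (Fin (n-1)), (‖y‖^2 + 1) ^ (-(((n : ℝ) + 2*s)/2))) * L)))
    ∧ (∀ ξ : ℝ, ∃ L : ℝ,
      Filter.Tendsto
        (fun δ : ℝ => ∫ h in {h : ℝ | δ < |h|}, (v (ξ + h) - v ξ) / |h| ^ (1 + 2*s))
        (nhdsWithin 0 (Set.Ioi 0)) (nhds L) ∧
      Filter.Tendsto
        (fun δ : ℝ => ∫ z in {z : EuclideanSpace ℝ (Fin n) | δ < ‖z‖},
          (v (ξ + ⟪e, z⟫) - v ξ) / ‖z‖ ^ ((n : ℝ) + 2*s))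
        (nhdsWithin 0 (Set.Ioi 0))
        (nhds (‖e‖ ^ (2*s)
          * (∫ y : EuclideanSpace ℝ (Fin (n-1)), (‖y‖^2 + 1) ^ (-(((n : ℝ) + 2*s)/2))) * L))) := by
  obtain ⟨m, rfl⟩ : ∃ m, n = m + 1 := ⟨n - 1, by omega⟩
  refine ⟨fun x => ?_, fun ξ => principalValues_at m hs e hvdiff hvC11 hvbdd ξ⟩
  simp only [inner_add_right]
  exact principalValues_at m hs e hvdiff hvC11 hvbdd ⟪e, x⟫
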